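/- arXiv:1609.07013 — 2 statements merged into one kernel-verified Lean document; each statement's English description precedes it below -/
import Mathlib

section
/- Friedrichs-type commutator estimate for the horizontal mollifier: There is a constant C, depending only on ρ, such that for every κ > 0, every bounded Lipschitz function h : ℝ² → ℝ (with sup norm and Lipschitz constant both at most M), every smooth compactly supported g : ℝ² → ℝ, and every coordinate direction α ∈ {1,2}, the commutator satisfies ‖Λ_κ(h · ∂_α g) − h · Λ_κ(∂_α g)‖_{L²(ℝ²)} ≤ C · M · ‖g‖_{L²(ℝ²)}. The bound is uniform in κ and does not involve any derivative of g. -/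
open MeasureTheory

/-- The partial derivative in the `α`-th coordinate direction on `ℝ²`. -/
noncomputable def pd2 (α : Fin 2) (f : (Fin 2 → ℝ) → ℝ) : (Fin 2 → ℝ) → ℝ :=
  fun x => fderiv ℝ f x (Pi.single α 1)

/-- The mollification `Λ_κ g = ρ_κ * g` on `ℝ²`, where `ρ_κ (x) = κ⁻² ρ (x / κ)`. -/
noncomputable def mollify (ρ : (Fin 2 → ℝ) → ℝ) (κ : ℝ) (g : (Fin 2 → ℝ) → ℝ) :
    (Fin 2 → ℝ) → ℝ :=
  fun x => ∫ y, (κ ^ 2)⁻¹ * ρ (κ⁻¹ • (x - y)) * g y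

/-!
In `φ ∗ (h ∂ᵥg) - h (φ ∗ ∂ᵥg) = ∫ φ(x - y) (h y - h x) ∂ᵥg(y) dy` the derivative can be moved off
`g`: when it hits `h` the Lipschitz bound absorbs it, and when it hits `φ` the factor
`|h y - h x| ≤ K |x - y|` compensates for the singularity of `∇φ`. Hence the commutator is bounded
by `K |v|` times the convolution of `|g|` with the weight `|φ| + |z| |∇φ|`, whose integral is
unchanged under `φ ↦ κ⁻ᵈ φ(·/κ)`, and Young's inequality concludes.
-/

open Module
open scoped ENNReal NNReal Convolution

section Young

lemma lintegral_mul_rpow_le_rpow_mul_lintegral {α : Type*} [MeasurableSpace α] {μ : Measure α}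
    {f g : α → ℝ≥0∞} (hf : AEMeasurable f μ) (hg : AEMeasurable g μ) {p : ℝ} (hp : 1 ≤ p) :
    (∫⁻ a, f a * g a ∂μ) ^ p ≤ (∫⁻ a, f a ∂μ) ^ (p - 1) * ∫⁻ a, f a * g a ^ p ∂μ := by
  have hp₀ : 0 < p := zero_lt_one.trans_le hp
  have hq : 0 ≤ 1 - p⁻¹ := sub_nonneg.2 (inv_le_one_of_one_le₀ hp)
  have hsplit (a : α) : f a * g a = f a ^ (1 - p⁻¹) * (f a * g a ^ p) ^ p⁻¹ := by
    rw [ENNReal.mul_rpow_of_nonneg _ _ (by positivity), ← mul_assoc,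
      ← ENNReal.rpow_add_of_nonneg _ _ hq (by positivity), sub_add_cancel, ENNReal.rpow_one,
      ENNReal.rpow_rpow_inv hp₀.ne']
  calc (∫⁻ a, f a * g a ∂μ) ^ p
      ≤ ((∫⁻ a, f a ∂μ) ^ (1 - p⁻¹) * (∫⁻ a, f a * g a ^ p ∂μ) ^ p⁻¹) ^ p := by
        simp_rw [hsplit]
        gcongr
        exact ENNReal.lintegral_mul_norm_pow_le hf (hf.mul (hg.pow_const p)) hq (by positivity)
          (sub_add_cancel _ _)
    _ = (∫⁻ a, f a ∂μ) ^ (p - 1) * ∫⁻ a, f a * g a ^ p ∂μ := by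
        rw [ENNReal.mul_rpow_of_nonneg _ _ hp₀.le, ENNReal.rpow_inv_rpow hp₀.ne',
          ← ENNReal.rpow_mul, sub_mul, inv_mul_cancel₀ hp₀.ne', one_mul]

variable {G : Type*} [AddGroup G] [MeasurableSpace G] [MeasurableAdd₂ G] [MeasurableNeg G]
  {μ : Measure G} [μ.IsAddLeftInvariant] [SFinite μ] {f g : G → ℝ≥0∞}

lemma lintegral_lconvolution (hf : AEMeasurable f μ) (hg : AEMeasurable g μ) :
    ∫⁻ x, (f ⋆ₗ[μ] g) x ∂μ = (∫⁻ x, f x ∂μ) * ∫⁻ x, g x ∂μ := by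
  simp_rw [lconvolution_def]
  rw [lintegral_lintegral_swap (by fun_prop), ← lintegral_mul_const'' _ hf]
  refine lintegral_congr fun y => ?_
  have hg_shift : AEMeasurable (fun x => g (-y + x)) μ :=
    hg.comp_quasiMeasurePreserving (measurePreserving_add_left μ (-y)).quasiMeasurePreserving
  rw [lintegral_const_mul'' _ hg_shift, lintegral_add_left_eq_self g (-y)]

lemma quasiMeasurePreserving_neg_add_right (x : G) :
    Measure.QuasiMeasurePreserving (fun y => -y + x) μ μ :=
  (quasiMeasurePreserving_add_right μ x).comp (quasiMeasurePreserving_neg μ)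

lemma lconvolution_le_lintegral_mul_eLpNorm_top (hf : AEMeasurable f μ) (x : G) :
    (f ⋆ₗ[μ] g) x ≤ (∫⁻ y, f y ∂μ) * eLpNorm g ∞ μ := by
  rw [lconvolution_def, ← lintegral_mul_const'' _ hf]
  refine lintegral_mono_ae ?_
  filter_upwards [(quasiMeasurePreserving_neg_add_right x).ae
    (ae_le_eLpNormEssSup (f := g))] with y hy
  rw [eLpNorm_exponent_top]
  gcongr
  exact hy

lemma lconvolution_rpow_le (hf : AEMeasurable f μ) (hg : AEMeasurable g μ) {p : ℝ} (hp : 1 ≤ p)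
    (x : G) :
    (f ⋆ₗ[μ] g) x ^ p ≤ (∫⁻ y, f y ∂μ) ^ (p - 1) * (f ⋆ₗ[μ] fun y => g y ^ p) x :=
  lintegral_mul_rpow_le_rpow_mul_lintegral hf
    (hg.comp_quasiMeasurePreserving (quasiMeasurePreserving_neg_add_right x)) hp

lemma lintegral_lconvolution_rpow_le (hf : AEMeasurable f μ) (hg : AEMeasurable g μ) {p : ℝ}
    (hp : 1 ≤ p) :
    ∫⁻ x, (f ⋆ₗ[μ] g) x ^ p ∂μ ≤ (∫⁻ x, f x ∂μ) ^ p * ∫⁻ x, g x ^ p ∂μ := by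
  have hgp : AEMeasurable (fun x => g x ^ p) μ := hg.pow_const p
  calc ∫⁻ x, (f ⋆ₗ[μ] g) x ^ p ∂μ
      ≤ ∫⁻ x, (∫⁻ y, f y ∂μ) ^ (p - 1) * (f ⋆ₗ[μ] fun y => g y ^ p) x ∂μ :=
        lintegral_mono (lconvolution_rpow_le hf hg hp)
    _ = (∫⁻ x, f x ∂μ) ^ (p - 1) * ((∫⁻ x, f x ∂μ) * ∫⁻ x, g x ^ p ∂μ) := by
        rw [lintegral_const_mul'' _ (aemeasurable_lconvolution hf hgp),
          lintegral_lconvolution hf hgp]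
    _ = (∫⁻ x, f x ∂μ) ^ p * ∫⁻ x, g x ^ p ∂μ := by
        nth_rw 2 [← ENNReal.rpow_one (∫⁻ x, f x ∂μ)]
        rw [← mul_assoc, ← ENNReal.rpow_add_of_nonneg _ _ (sub_nonneg.2 hp) zero_le_one,
          sub_add_cancel]

theorem eLpNorm_lconvolution_le (hf : AEMeasurable f μ) (hg : AEMeasurable g μ) {p : ℝ≥0∞}
    (hp : 1 ≤ p) : eLpNorm (f ⋆ₗ[μ] g) p μ ≤ (∫⁻ x, f x ∂μ) * eLpNorm g p μ := by
  obtain rfl | hp_top := eq_or_ne p ∞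
  · exact eLpNormEssSup_le_of_ae_enorm_bound
      (.of_forall (lconvolution_le_lintegral_mul_eLpNorm_top hf))
  have hp₁ : 1 ≤ p.toReal := by simpa using ENNReal.toReal_mono hp_top hp
  have hp₀ : p.toReal ≠ 0 := (zero_lt_one.trans_le hp₁).ne'
  simp only [eLpNorm_eq_lintegral_rpow_enorm_toReal (zero_lt_one.trans_le hp).ne' hp_top,
    enorm_eq_self, one_div]
  calc (∫⁻ x, (f ⋆ₗ[μ] g) x ^ p.toReal ∂μ) ^ p.toReal⁻¹
      ≤ ((∫⁻ x, f x ∂μ) ^ p.toReal * ∫⁻ x, g x ^ p.toReal ∂μ) ^ p.toReal⁻¹ := by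
        gcongr
        exact lintegral_lconvolution_rpow_le hf hg hp₁
    _ = (∫⁻ x, f x ∂μ) * (∫⁻ x, g x ^ p.toReal ∂μ) ^ p.toReal⁻¹ := by
        rw [ENNReal.mul_rpow_of_nonneg _ _ (by positivity), ENNReal.rpow_rpow_inv hp₀]

end Young

section Kernel

variable {E : Type*} [NormedAddCommGroup E] [NormedSpace ℝ E]

/-- The `L¹`-normalised dilation `x ↦ κ⁻ᵈ ρ (x / κ)` of a kernel on a `d`-dimensional space. -/
noncomputable def scaledKernel (κ : ℝ) (ρ : E → ℝ) : E → ℝ :=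
  fun x => (κ ^ finrank ℝ E)⁻¹ * ρ (κ⁻¹ • x)

/-- The weight `|φ(z)| + |z| |∇φ(z)|` whose integral controls the commutator of multiplication by a
Lipschitz function and convolution by `φ`. It is `ℝ≥0∞`-valued so that this integral is never a
junk value. -/
noncomputable def commutatorWeight (φ : E → ℝ) : E → ℝ≥0∞ :=
  fun z => ‖φ z‖ₑ + ‖z‖ₑ * ‖fderiv ℝ φ z‖ₑ

lemma contDiff_scaledKernel {n : WithTop ℕ∞} {ρ : E → ℝ} (hρ : ContDiff ℝ n ρ) (κ : ℝ) :
    ContDiff ℝ n (scaledKernel κ ρ) :=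
  contDiff_const.mul (hρ.comp (contDiff_const_smul κ⁻¹))

lemma fderiv_scaledKernel (κ : ℝ) (ρ : E → ℝ) (z : E) :
    fderiv ℝ (scaledKernel κ ρ) z = (κ ^ finrank ℝ E)⁻¹ • κ⁻¹ • fderiv ℝ ρ (κ⁻¹ • z) := by
  rw [← fderiv_comp_smul]
  exact congrFun (fderiv_const_smul_field (κ ^ finrank ℝ E)⁻¹) z

lemma commutatorWeight_scaledKernel (κ : ℝ) (ρ : E → ℝ) (z : E) :
    commutatorWeight (scaledKernel κ ρ) z =
      ‖(κ ^ finrank ℝ E)⁻¹‖ₑ * commutatorWeight ρ (κ⁻¹ • z) := by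
  simp only [commutatorWeight, fderiv_scaledKernel, scaledKernel, enorm_smul, enorm_mul]
  ring

variable [MeasurableSpace E] {μ : Measure E}

lemma lintegral_commutatorWeight_ne_top {ρ : E → ℝ} (hρ : Integrable ρ μ)
    (hρ' : Integrable (fun z => ‖z‖ • fderiv ℝ ρ z) μ) :
    ∫⁻ z, commutatorWeight ρ z ∂μ ≠ ∞ := by
  simp only [commutatorWeight]
  rw [lintegral_add_left' hρ.1.enorm]
  refine ENNReal.add_ne_top.2 ⟨hρ.2.ne, ?_⟩
  simpa only [enorm_smul, enorm_norm] using hρ'.2.ne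

variable [BorelSpace E]

lemma measurable_commutatorWeight {φ : E → ℝ} (hφ : Measurable φ) :
    Measurable (commutatorWeight φ) :=
  hφ.enorm.add (measurable_enorm.mul (measurable_fderiv ℝ φ).enorm)

variable [FiniteDimensional ℝ E] [μ.IsAddHaarMeasure]

lemma lintegral_comp_smul_addHaar {r : ℝ} (hr : r ≠ 0) (f : E → ℝ≥0∞) :
    ∫⁻ x, f (r • x) ∂μ = ‖(r ^ finrank ℝ E)⁻¹‖ₑ * ∫⁻ x, f x ∂μ := by
  calc ∫⁻ x, f (r • x) ∂μ = ∫⁻ x, f x ∂μ.map (r • ·) :=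
        (lintegral_map_equiv f (MeasurableEquiv.smul₀ r hr)).symm
    _ = ‖(r ^ finrank ℝ E)⁻¹‖ₑ * ∫⁻ x, f x ∂μ := by
        rw [Measure.map_addHaar_smul μ hr, lintegral_smul_measure, Real.enorm_eq_ofReal_abs,
          smul_eq_mul]

lemma lintegral_commutatorWeight_scaledKernel {κ : ℝ} (hκ : κ ≠ 0) (ρ : E → ℝ) :
    ∫⁻ z, commutatorWeight (scaledKernel κ ρ) z ∂μ = ∫⁻ z, commutatorWeight ρ z ∂μ := by
  simp_rw [commutatorWeight_scaledKernel]
  rw [lintegral_const_mul' _ _ enorm_ne_top, lintegral_comp_smul_addHaar (inv_ne_zero hκ),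
    ← mul_assoc, ← enorm_mul, inv_pow, inv_inv, inv_mul_cancel₀ (pow_ne_zero _ hκ), enorm_one,
    one_mul]

end Kernel

section IntegrationByParts

variable {E : Type*} [NormedAddCommGroup E] [NormedSpace ℝ E] [FiniteDimensional ℝ E]
  [MeasurableSpace E] [BorelSpace E] {μ : Measure E} [μ.IsAddHaarMeasure]
  {φ H f g : E → ℝ} {K : ℝ≥0}

lemma integral_lineDeriv_mul_eq_neg_integral_mul_fderiv (hH : LipschitzWith K H)
    (hf : ContDiff ℝ 1 f) (hf_supp : HasCompactSupport f) (v : E) :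
    ∫ y, lineDeriv ℝ H y v * f y ∂μ = -∫ y, H y * fderiv ℝ f y v ∂μ := by
  obtain ⟨D, hD⟩ := hf.lipschitzWith_of_hasCompactSupport hf_supp one_ne_zero
  rw [hH.integral_lineDeriv_mul_eq hD hf_supp, ← integral_neg]
  refine integral_congr_ae (.of_forall fun y => ?_)
  simp only [(hf.differentiable one_ne_zero y).lineDeriv_eq_fderiv, map_neg]
  ring

lemma integral_mul_mul_fderiv_eq_neg_of_lipschitzWith (hφ : ContDiff ℝ 1 φ)
    (hH : LipschitzWith K H) (hg : ContDiff ℝ 1 g) (hg_supp : HasCompactSupport g) (v : E) :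
    ∫ y, φ y * (H y * fderiv ℝ g y v) ∂μ =
      -∫ y, (lineDeriv ℝ H y v * φ y + H y * fderiv ℝ φ y v) * g y ∂μ := by
  have hφg_supp : HasCompactSupport fun y => φ y * g y := hg_supp.mul_left
  have hHc := hH.continuous
  have hφc := hφ.continuous
  have hgc := hg.continuous
  have : Continuous fun y => fderiv ℝ φ y v :=
    (hφ.continuous_fderiv one_ne_zero).clm_apply continuous_const
  have : Continuous fun y => fderiv ℝ g y v :=
    (hg.continuous_fderiv one_ne_zero).clm_apply continuous_const
  have h_int₁ : Integrable (fun y => φ y * (H y * fderiv ℝ g y v)) μ :=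
    Continuous.integrable_of_hasCompactSupport (by fun_prop)
      (hg_supp.fderiv_apply ℝ v).mul_left.mul_left
  have h_int₂ : Integrable (fun y => H y * fderiv ℝ φ y v * g y) μ :=
    Continuous.integrable_of_hasCompactSupport (by fun_prop) hg_supp.mul_left
  have h_int₃ : Integrable (fun y => lineDeriv ℝ H y v * (φ y * g y)) μ :=
    ((hφc.mul hgc).integrable_of_hasCompactSupport hφg_supp).bdd_mul
      (aestronglyMeasurable_lineDeriv hHc μ)
      (.of_forall fun y => norm_lineDeriv_le_of_lipschitz ℝ hH)
  have hprod (y : E) : H y * fderiv ℝ (fun y => φ y * g y) y v =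
      φ y * (H y * fderiv ℝ g y v) + H y * fderiv ℝ φ y v * g y := by
    rw [fderiv_fun_mul (hφ.differentiable one_ne_zero y) (hg.differentiable one_ne_zero y)]
    simp only [add_apply, smul_apply, smul_eq_mul]
    ring
  have hparts := integral_lineDeriv_mul_eq_neg_integral_mul_fderiv (μ := μ) hH (hφ.mul hg)
    hφg_supp v
  simp_rw [hprod] at hparts
  rw [integral_add h_int₁ h_int₂] at hparts
  simp_rw [add_mul, mul_assoc (lineDeriv ℝ H _ v)]
  rw [integral_add h_int₃ h_int₂]
  linarith

end IntegrationByParts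

section Commutator

lemma lipschitzWith_sub_const {X F : Type*} [PseudoEMetricSpace X] [SeminormedAddCommGroup F]
    {K : ℝ≥0} {f : X → F} (hf : LipschitzWith K f) (c : F) : LipschitzWith K fun x => f x - c :=
  fun x y => by simpa only [edist_sub_right] using hf x y

variable {E : Type*} [NormedAddCommGroup E] [NormedSpace ℝ E] {φ h f g H : E → ℝ} {K : ℝ≥0}

lemma fderiv_comp_const_sub (φ : E → ℝ) (x y : E) :
    fderiv ℝ (fun y => φ (x - y)) y = -fderiv ℝ φ (x - y) := by
  simpa [fderiv_comp_add_left, ← sub_eq_add_neg] using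
    fderiv_comp_smul (f := fun z => φ (x + z)) (x := y) (-1 : ℝ)

lemma enorm_lineDeriv_le_of_lipschitzWith (hH : LipschitzWith K H) (y v : E) :
    ‖lineDeriv ℝ H y v‖ₑ ≤ K * ‖v‖ₑ := by
  rw [← ofReal_norm, ← ofReal_norm, ← ENNReal.ofReal_coe_nnreal, ← ENNReal.ofReal_mul K.coe_nonneg]
  exact ENNReal.ofReal_le_ofReal (norm_lineDeriv_le_of_lipschitz ℝ hH)

lemma enorm_leibniz_le_commutatorWeight (hh : LipschitzWith K h) (φ : E → ℝ) (x y v : E) :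
    ‖lineDeriv ℝ (fun y => h y - h x) y v * φ (x - y) +
        (h y - h x) * fderiv ℝ (fun y => φ (x - y)) y v‖ₑ ≤
      K * ‖v‖ₑ * commutatorWeight φ (x - y) := by
  have hhx : ‖h y - h x‖ₑ ≤ K * ‖x - y‖ₑ := by
    simpa only [← edist_eq_enorm_sub, edist_comm x y] using hh y x
  rw [fderiv_comp_const_sub]
  calc _ ≤ K * ‖v‖ₑ * ‖φ (x - y)‖ₑ + K * ‖x - y‖ₑ * (‖fderiv ℝ φ (x - y)‖ₑ * ‖v‖ₑ) := by
        refine (enorm_add_le _ _).trans ?_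
        rw [enorm_mul, enorm_mul, neg_apply, enorm_neg]
        gcongr
        · exact enorm_lineDeriv_le_of_lipschitzWith (lipschitzWith_sub_const hh (h x)) y v
        · exact ContinuousLinearMap.le_opENorm _ v
    _ = K * ‖v‖ₑ * commutatorWeight φ (x - y) := by
        rw [commutatorWeight]
        ring

variable [MeasurableSpace E]

/-- The commutator `[φ ∗ ·, h] f = φ ∗ (h f) - h (φ ∗ f)` of convolution by `φ` and multiplication
by `h`. -/
noncomputable def convolutionCommutator (μ : Measure E) (φ h f : E → ℝ) : E → ℝ :=
  fun x => (φ ⋆[ContinuousLinearMap.mul ℝ ℝ, μ] fun y => h y * f y) x -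
    h x * (φ ⋆[ContinuousLinearMap.mul ℝ ℝ, μ] f) x

variable [BorelSpace E] [FiniteDimensional ℝ E] {μ : Measure E} [μ.IsAddHaarMeasure]

lemma convolutionCommutator_eq_integral (hφ : Continuous φ) (hh : Continuous h)
    (hf : Continuous f) (hf_supp : HasCompactSupport f) (x : E) :
    convolutionCommutator μ φ h f x = ∫ y, φ (x - y) * ((h y - h x) * f y) ∂μ := by
  have h_int₁ : Integrable (fun y => φ (x - y) * (h y * f y)) μ :=
    Continuous.integrable_of_hasCompactSupport (by fun_prop) hf_supp.mul_left.mul_left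
  have h_int₂ : Integrable (fun y => h x * (φ (x - y) * f y)) μ :=
    Continuous.integrable_of_hasCompactSupport (by fun_prop) hf_supp.mul_left.mul_left
  rw [convolutionCommutator, convolution_mul_swap, convolution_mul_swap, ← integral_const_mul,
    ← integral_sub h_int₁ h_int₂]
  congr! 2 with y
  ring

lemma enorm_convolutionCommutator_fderiv_le (hφ : ContDiff ℝ 1 φ) (hh : LipschitzWith K h)
    (hg : ContDiff ℝ 1 g) (hg_supp : HasCompactSupport g) (v x : E) :
    ‖convolutionCommutator μ φ h (fun y => fderiv ℝ g y v) x‖ₑ ≤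
      K * ‖v‖ₑ * (commutatorWeight φ ⋆ₗ[μ] fun y => ‖g y‖ₑ) x := by
  have hφx : ContDiff ℝ 1 fun y => φ (x - y) := hφ.comp (contDiff_const.sub contDiff_id)
  rw [convolutionCommutator_eq_integral hφ.continuous hh.continuous
      ((hg.continuous_fderiv one_ne_zero).clm_apply continuous_const)
      (hg_supp.fderiv_apply ℝ v),
    integral_mul_mul_fderiv_eq_neg_of_lipschitzWith hφx (lipschitzWith_sub_const hh (h x)) hg
      hg_supp, enorm_neg,
    lconvolution_comm, lconvolution_def, ← lintegral_const_mul' _ _ (by finiteness)]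
  refine (enorm_integral_le_lintegral_enorm _).trans (lintegral_mono fun y => ?_)
  rw [enorm_mul, mul_comm, mul_left_comm, neg_add_eq_sub]
  gcongr
  exact enorm_leibniz_le_commutatorWeight hh φ x y v

theorem eLpNorm_convolutionCommutator_fderiv_le (hφ : ContDiff ℝ 1 φ) (hh : LipschitzWith K h)
    (hg : ContDiff ℝ 1 g) (hg_supp : HasCompactSupport g) (v : E) {p : ℝ≥0∞} (hp : 1 ≤ p) :
    eLpNorm (convolutionCommutator μ φ h fun y => fderiv ℝ g y v) p μ ≤
      K * ‖v‖ₑ * (∫⁻ z, commutatorWeight φ z ∂μ) * eLpNorm g p μ := by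
  have hW : Measurable (commutatorWeight φ) := measurable_commutatorWeight hφ.continuous.measurable
  have hg_meas : Measurable fun y => ‖g y‖ₑ := hg.continuous.measurable.enorm
  calc eLpNorm (convolutionCommutator μ φ h fun y => fderiv ℝ g y v) p μ
      ≤ K * ‖v‖ₑ * eLpNorm (commutatorWeight φ ⋆ₗ[μ] fun y => ‖g y‖ₑ) p μ :=
        eLpNorm_le_mul_eLpNorm_of_ae_le_mul'' p
          (measurable_lconvolution μ hW hg_meas).aestronglyMeasurable
          (.of_forall (enorm_convolutionCommutator_fderiv_le hφ hh hg hg_supp v))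
    _ ≤ K * ‖v‖ₑ * ((∫⁻ z, commutatorWeight φ z ∂μ) * eLpNorm g p μ) := by
        gcongr
        simpa only [eLpNorm_enorm] using
          eLpNorm_lconvolution_le hW.aemeasurable hg_meas.aemeasurable hp
    _ = _ := (mul_assoc _ _ _).symm

end Commutator

theorem friedrichs_commutator_general {E : Type*} [NormedAddCommGroup E] [NormedSpace ℝ E]
    [FiniteDimensional ℝ E] [MeasurableSpace E] [BorelSpace E] (μ : Measure E)
    [μ.IsAddHaarMeasure] (ρ : E → ℝ) (hρ : ContDiff ℝ 1 ρ) (hρ_int : Integrable ρ μ)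
    (hρ'_int : Integrable (fun z => ‖z‖ • fderiv ℝ ρ z) μ) :
    ∃ C > (0 : ℝ≥0), ∀ κ : ℝ, κ ≠ 0 → ∀ (K : ℝ≥0) (h : E → ℝ), LipschitzWith K h →
      ∀ g : E → ℝ, ContDiff ℝ 1 g → HasCompactSupport g → ∀ (v : E) (p : ℝ≥0∞), 1 ≤ p →
        eLpNorm (convolutionCommutator μ (scaledKernel κ ρ) h fun y => fderiv ℝ g y v) p μ ≤
          C * K * ‖v‖ₑ * eLpNorm g p μ := by
  set I : ℝ≥0∞ := ∫⁻ z, commutatorWeight ρ z ∂μ with hI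
  have hI_le : I ≤ (I.toNNReal + 1 : ℝ≥0) := by
    rw [ENNReal.coe_add, ENNReal.coe_toNNReal (lintegral_commutatorWeight_ne_top hρ_int hρ'_int)]
    exact le_self_add
  refine ⟨I.toNNReal + 1, by positivity, fun κ hκ K h hh g hg hg_supp v p hp => ?_⟩
  calc _ ≤ K * ‖v‖ₑ * I * eLpNorm g p μ := by
        rw [hI, ← lintegral_commutatorWeight_scaledKernel hκ ρ]
        exact eLpNorm_convolutionCommutator_fderiv_le (contDiff_scaledKernel hρ κ) hh hg hg_supp
          v hp
    _ = I * K * ‖v‖ₑ * eLpNorm g p μ := by ring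
    _ ≤ _ := by gcongr

section Plane

lemma mollify_eq_convolution (ρ : (Fin 2 → ℝ) → ℝ) (κ : ℝ) (g : (Fin 2 → ℝ) → ℝ) :
    mollify ρ κ g = scaledKernel κ ρ ⋆[ContinuousLinearMap.mul ℝ ℝ, volume] g := by
  ext x
  simp only [mollify, convolution_mul_swap, scaledKernel, finrank_fin_fun]

lemma isCompact_setOf_sum_sq_le {ι : Type*} [Fintype ι] (r : ℝ) :
    IsCompact {x : ι → ℝ | ∑ i, x i ^ 2 ≤ r} := by
  refine (isCompact_closedBall 0 √r).of_isClosed_subset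
    (isClosed_le (by fun_prop) continuous_const) fun x hx => ?_
  rw [mem_closedBall_zero_iff, pi_norm_le_iff_of_nonneg (Real.sqrt_nonneg r)]
  exact fun i => Real.abs_le_sqrt
    ((Finset.single_le_sum (fun j _ => sq_nonneg (x j)) (Finset.mem_univ i)).trans hx)

end Plane

/-- **Friedrichs-type commutator estimate for the horizontal mollifier.** There is a constant
`C > 0`, depending only on the mollifying kernel `ρ` (smooth, nonnegative, supported in the
closed Euclidean unit ball, of integral one), such that for every `κ > 0`, every bounded
Lipschitz `h` (sup norm and Lipschitz constant both at most `M`), every smooth compactly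
supported `g` and every coordinate direction `α`,
`‖Λ_κ (h ∂_α g) − h Λ_κ (∂_α g)‖_{L²} ≤ C M ‖g‖_{L²}`, uniformly in `κ`. -/
theorem friedrichs_commutator
    (ρ : (Fin 2 → ℝ) → ℝ) (hρ : ContDiff ℝ (⊤ : ℕ∞) ρ) (hρnn : ∀ x, 0 ≤ ρ x)
    (hρsupp : tsupport ρ ⊆ {x : Fin 2 → ℝ | ∑ i : Fin 2, x i ^ 2 ≤ 1})
    (hρint : ∫ x, ρ x = 1) :
    ∃ C > 0, ∀ κ > (0 : ℝ), ∀ (M : ℝ) (h : (Fin 2 → ℝ) → ℝ),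
      (∀ x, |h x| ≤ M) → LipschitzWith (Real.toNNReal M) h →
      ∀ g : (Fin 2 → ℝ) → ℝ, ContDiff ℝ (⊤ : ℕ∞) g → HasCompactSupport g →
      ∀ α : Fin 2,
        eLpNorm (fun x => mollify ρ κ (fun y => h y * pd2 α g y) x
            - h x * mollify ρ κ (pd2 α g) x) 2 volume
          ≤ ENNReal.ofReal (C * M) * eLpNorm g 2 volume := by
  have hρ_supp : HasCompactSupport ρ :=
    (isCompact_setOf_sum_sq_le 1).of_isClosed_subset (isClosed_tsupport ρ) hρsupp
  have hρ' : Continuous (fderiv ℝ ρ) := hρ.continuous_fderiv (by simp)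
  obtain ⟨C, hC, hbound⟩ := friedrichs_commutator_general volume ρ (hρ.of_le (by simp))
    (hρ.continuous.integrable_of_hasCompactSupport hρ_supp)
    ((continuous_norm.smul hρ').integrable_of_hasCompactSupport (hρ_supp.fderiv ℝ).smul_left)
  refine ⟨C, hC, fun κ hκ M h _ hh g hg hg_supp α => ?_⟩
  have h_unit : ‖(Pi.single α 1 : Fin 2 → ℝ)‖ₑ = 1 := by simp [← ofReal_norm, Pi.norm_single]
  simp_rw [mollify_eq_convolution, ENNReal.ofReal_mul C.coe_nonneg, ENNReal.ofReal_coe_nnreal]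
  exact (hbound κ hκ.ne' M.toNNReal h hh g (hg.of_le (by simp)) hg_supp (Pi.single α 1) 2
    one_le_two).trans_eq (by rw [h_unit, mul_one, ENNReal.ofReal])
end

section
/- Moser-type symmetric commutator estimate: For every natural number k ≥ 2 there is a constant C such that for all smooth compactly supported functions g, h : ℝ³ → ℝ and every multi-index α with |α| = k, the symmetric commutator [∂^α, g, h] := ∂^α(g·h) − (∂^α g)·h − g·∂^α h satisfies ‖[∂^α, g, h]‖_{L²(ℝ³)} ≤ C ( ‖∇g‖_{H^{k−2}} · ‖∇h‖_{H^{⌊(k−2)/2⌋+2}} + ‖∇g‖_{H^{⌊(k−2)/2⌋+2}} · ‖∇h‖_{H^{k−2}} ), where ‖∇g‖_{H^m} denotes the sum of the H^m norms of the three first-order partial derivatives of g. -/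
open MeasureTheory

/-- The partial derivative in the `i`-th coordinate direction on `ℝ³`. -/
noncomputable def pd3 (i : Fin 3) (f : (Fin 3 → ℝ) → ℝ) : (Fin 3 → ℝ) → ℝ :=
  fun x => fderiv ℝ f x (Pi.single i 1)

/-- The iterated partial derivative `∂^α = ∂₁^{α 0} ∂₂^{α 1} ∂₃^{α 2}` on `ℝ³`
associated with a multi-index `α : Fin 3 → ℕ`. -/
noncomputable def mderiv (α : Fin 3 → ℕ) (f : (Fin 3 → ℝ) → ℝ) : (Fin 3 → ℝ) → ℝ :=
  (pd3 0)^[α 0] ((pd3 1)^[α 1] ((pd3 2)^[α 2] f))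

/-- The `H^m (ℝ³)` norm: the sum over `0 ≤ j ≤ m` of the `L²` norms of the `j`-th iterated
total derivatives. -/
noncomputable def Hnorm (m : ℕ) (f : (Fin 3 → ℝ) → ℝ) : ℝ :=
  ∑ j ∈ Finset.range (m + 1),
    (eLpNorm (fun x => ‖iteratedFDeriv ℝ j f x‖) 2 volume).toReal

/-- The `H^m` norm of the gradient: the sum of the `H^m` norms of the three first-order
partial derivatives. -/
noncomputable def gradHnorm (m : ℕ) (f : (Fin 3 → ℝ) → ℝ) : ℝ :=
  ∑ i : Fin 3, Hnorm m (pd3 i f)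

/-!
By Fourier inversion, `‖f‖_∞ ≤ ‖𝓕 f‖₁`, and in dimension less than four `(1 + |ξ|²)⁻¹` is square
integrable; Cauchy–Schwarz and Plancherel therefore bound `‖f‖_∞` by the `L²` norms of `f` and
`Δ f`. By the Leibniz rule, `[∂^α, g, h]` is a sum of products `(∂^u g) (∂^v h)` in which both `u`
and `v` have positive order. Measure the factor with fewer derivatives, whose order is at most
`⌊k/2⌋`, in `L^∞`, at the price of two more derivatives, and the other one in `L²`.
-/

open SchwartzMap Laplacian
open scoped FourierTransform LineDeriv

section Sobolev

variable {E V : Type*} [NormedAddCommGroup E] [InnerProductSpace ℝ E] [FiniteDimensional ℝ E]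
  [MeasurableSpace E] [BorelSpace E] [NormedAddCommGroup V]

lemma memLp_two_inv_one_add_norm_sq (hE : Module.finrank ℝ E < 4) :
    MemLp (fun x : E ↦ (1 + ‖x‖ ^ 2)⁻¹) 2 := by
  have hcont : Continuous fun x : E ↦ (1 + ‖x‖ ^ 2)⁻¹ :=
    Continuous.inv₀ (by fun_prop) fun x ↦ by positivity
  rw [memLp_two_iff_integrable_sq hcont.aestronglyMeasurable]
  refine (integrable_rpow_neg_one_add_norm_sq (E := E) (r := 4) (by exact_mod_cast hE)).congr
    (.of_forall fun x ↦ ?_)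
  have hexp : (-4 / 2 : ℝ) = -(2 : ℕ) := by norm_num
  simp only [hexp, Real.rpow_neg (by positivity : 0 ≤ 1 + ‖x‖ ^ 2), Real.rpow_natCast, inv_pow]

lemma norm_toLp_sub_smul_laplacian_le [NormedSpace ℝ V] {c : ℝ} (hc : ‖c‖ ≤ 1) (f : 𝓢(E, V)) :
    ‖(f - c • Δ f).toLp 2‖ ≤ ‖f.toLp 2‖ + ‖(Δ f).toLp 2‖ :=
  calc ‖(f - c • Δ f).toLp 2 volume‖
    _ = ‖f.toLp 2 volume - c • (Δ f).toLp 2 volume‖ := by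
      simp only [← toLpCLM_apply (𝕜 := ℝ), map_sub, map_smul]
    _ ≤ ‖f.toLp 2 volume‖ + ‖c‖ * ‖(Δ f).toLp 2 volume‖ := by grw [norm_sub_le, norm_smul]
    _ ≤ ‖f.toLp 2 volume‖ + ‖(Δ f).toLp 2 volume‖ := by grw [hc, one_mul]

section Complete

variable [NormedSpace ℂ V] [CompleteSpace V]

lemma fourier_laplacian_apply (f : 𝓢(E, V)) (ξ : E) :
    𝓕 (Δ f) ξ = -((2 * Real.pi) ^ 2 * ‖ξ‖ ^ 2) • 𝓕 f ξ := by
  rw [laplacian_eq_fourierMultiplierCLM, FourierTransform.fourier_smul,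
    fourierMultiplierCLM_apply, FourierTransform.fourier_fourierInv_eq, smul_apply,
    smulLeftCLM_apply_apply (by fun_prop), smul_smul, neg_mul]

lemma fourier_sub_laplacian_apply (f : 𝓢(E, V)) (ξ : E) :
    𝓕 (f - ((2 * Real.pi) ^ 2)⁻¹ • Δ f) ξ = (1 + ‖ξ‖ ^ 2) • 𝓕 f ξ := by
  rw [sub_eq_add_neg, FourierTransform.fourier_add, ← neg_smul, FourierTransform.fourier_smul,
    add_apply, smul_apply, fourier_laplacian_apply, smul_smul, add_smul, one_smul]
  congr 2
  field_simp

lemma norm_apply_le_norm_toLp_one_fourier (f : 𝓢(E, V)) (x : E) : ‖f x‖ ≤ ‖(𝓕 f).toLp 1‖ := by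
  have hinv : 𝓕 (𝓕 f) (-x) = f x := by
    have hf : 𝓕⁻ (𝓕 f) = f := FourierTransform.fourierInv_fourier_eq f
    conv_rhs => rw [← hf, fourierInv_apply_eq]
    rfl
  exact hinv ▸ norm_fourier_apply_le_toLp_one (𝓕 f) (-x)

end Complete

variable [InnerProductSpace ℂ V] [CompleteSpace V]

lemma norm_toLp_one_fourier_le (hE : Module.finrank ℝ E < 4) (f : 𝓢(E, V)) :
    ‖(𝓕 f).toLp 1‖ ≤ (eLpNorm (fun ξ : E ↦ (1 + ‖ξ‖ ^ 2)⁻¹) 2).toReal *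
      ‖(f - ((2 * Real.pi) ^ 2)⁻¹ • Δ f).toLp 2‖ := by
  have hw := memLp_two_inv_one_add_norm_sq hE
  let G : 𝓢(E, V) := 𝓕 (f - ((2 * Real.pi) ^ 2)⁻¹ • Δ f)
  have hfG : ⇑(𝓕 f : 𝓢(E, V)) = (fun ξ : E ↦ (1 + ‖ξ‖ ^ 2)⁻¹) • ⇑G := by
    ext ξ
    rw [Pi.smul_apply', fourier_sub_laplacian_apply, inv_smul_smul₀ (by positivity)]
  have hG : MemLp G 2 := G.memLp 2 volume
  rw [← norm_fourier_toL2_eq, norm_toLp, norm_toLp, hfG, ← ENNReal.toReal_mul]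
  exact ENNReal.toReal_mono (ENNReal.mul_ne_top hw.eLpNorm_ne_top hG.eLpNorm_ne_top)
    (eLpNorm_smul_le_mul_eLpNorm hG.1 hw.1)

theorem exists_norm_apply_le_toLp_two_laplacian (hE : Module.finrank ℝ E < 4) :
    ∃ K : ℝ, 0 < K ∧ ∀ (f : 𝓢(E, V)) (x : E), ‖f x‖ ≤ K * (‖f.toLp 2‖ + ‖(Δ f).toLp 2‖) := by
  let I : ℝ := (eLpNorm (fun ξ : E ↦ (1 + ‖ξ‖ ^ 2)⁻¹) 2).toReal
  have hI : 0 ≤ I := ENNReal.toReal_nonneg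
  have hc : ‖((2 * Real.pi) ^ 2)⁻¹‖ ≤ 1 := by
    rw [Real.norm_of_nonneg (by positivity)]
    exact inv_le_one_of_one_le₀ (by nlinarith [Real.pi_gt_three])
  refine ⟨I + 1, add_pos_of_nonneg_of_pos hI one_pos, fun f x ↦ ?_⟩
  grw [norm_apply_le_norm_toLp_one_fourier, norm_toLp_one_fourier_le hE,
    norm_toLp_sub_smul_laplacian_le hc]
  gcongr
  exact le_add_of_nonneg_right zero_le_one

end Sobolev

section Transport

variable {D E F G : Type*} [NormedAddCommGroup D] [NormedSpace ℝ D] [NormedAddCommGroup E]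
  [NormedSpace ℝ E] [NormedAddCommGroup F] [NormedSpace ℝ F] [NormedAddCommGroup G]
  [NormedSpace ℝ G]

lemma lineDerivOp_postcompCLM (v : E) (L : F →L[ℝ] G) (f : 𝓢(E, F)) :
    ∂_{v} (f.postcompCLM L) = (∂_{v} f).postcompCLM L := by
  ext x
  rw [postcompCLM_apply, lineDerivOp_apply_eq_fderiv, lineDerivOp_apply_eq_fderiv]
  exact congr($((L.hasFDerivAt.comp x (f.hasFDerivAt x)).fderiv) v)

variable [MeasurableSpace D] [BorelSpace D] [SecondCountableTopology D] [MeasurableSpace E]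
  [BorelSpace E] [SecondCountableTopology E]

lemma norm_toLp_postcompCLM_linearIsometry (L : F →ₗᵢ[ℝ] G) (f : 𝓢(E, F)) (p : ENNReal)
    (μ : Measure E) [μ.HasTemperateGrowth] :
    ‖(f.postcompCLM L.toContinuousLinearMap).toLp p μ‖ = ‖f.toLp p μ‖ := by
  rw [norm_toLp, norm_toLp]
  exact congr_arg _ (eLpNorm_congr_norm_ae (.of_forall fun x ↦ L.norm_map (f x)))

lemma norm_toLp_compCLMOfContinuousLinearEquiv {e : D ≃L[ℝ] E} {μ : Measure D} {ν : Measure E}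
    [μ.HasTemperateGrowth] [ν.HasTemperateGrowth] (he : MeasurePreserving e μ ν) (f : 𝓢(E, F))
    (p : ENNReal) :
    ‖(compCLMOfContinuousLinearEquiv ℝ e f).toLp p μ‖ = ‖f.toLp p ν‖ := by
  rw [norm_toLp, norm_toLp, compCLMOfContinuousLinearEquiv_apply,
    eLpNorm_comp_measurePreserving f.continuous.aestronglyMeasurable he]

end Transport

section Pi

variable {ι : Type*} [Fintype ι]

/-- A real Schwartz function on `ι → ℝ`, regarded as a complex one on `EuclideanSpace ℝ ι`, where
the Fourier transform is available. -/
noncomputable def complexifyEuclidean (f : 𝓢(ι → ℝ, ℝ)) : 𝓢(EuclideanSpace ℝ ι, ℂ) :=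
  (compCLMOfContinuousLinearEquiv ℝ (EuclideanSpace.equiv ι ℝ) f).postcompCLM
    Complex.ofRealLI.toContinuousLinearMap

lemma norm_toLp_complexifyEuclidean (f : 𝓢(ι → ℝ, ℝ)) (p : ENNReal) :
    ‖(complexifyEuclidean f).toLp p‖ = ‖f.toLp p‖ := by
  rw [complexifyEuclidean, norm_toLp_postcompCLM_linearIsometry,
    norm_toLp_compCLMOfContinuousLinearEquiv (PiLp.volume_preserving_ofLp ι)]

variable [DecidableEq ι]

/-- The standard basis vector `e_i` of `ι → ℝ`, as the direction of the `i`-th partial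
derivative. -/
abbrev basisVec (i : ι) : ι → ℝ := Pi.single i 1

lemma lineDerivOp_complexifyEuclidean (i : ι) (f : 𝓢(ι → ℝ, ℝ)) :
    ∂_{EuclideanSpace.single i (1 : ℝ)} (complexifyEuclidean f) =
      complexifyEuclidean (∂_{basisVec i} f) := by
  rw [complexifyEuclidean, lineDerivOp_postcompCLM, lineDerivOp_compCLMOfContinuousLinearEquiv]
  rfl

lemma laplacian_complexifyEuclidean (f : 𝓢(ι → ℝ, ℝ)) :
    Δ (complexifyEuclidean f) =
      ∑ i : ι, complexifyEuclidean (∂_{basisVec i} (∂_{basisVec i} f)) := by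
  simp only [laplacian_eq_sum (EuclideanSpace.basisFun ι ℝ), EuclideanSpace.basisFun_apply,
    lineDerivOp_complexifyEuclidean]

variable (ι) in
theorem exists_abs_apply_le_toLp_two_lineDerivOp (hι : Fintype.card ι < 4) :
    ∃ K : ℝ, 0 < K ∧ ∀ (f : 𝓢(ι → ℝ, ℝ)) (x : ι → ℝ),
      |f x| ≤ K * (‖f.toLp 2‖ + ∑ i : ι, ‖(∂_{basisVec i} (∂_{basisVec i} f)).toLp 2‖) := by
  obtain ⟨K, hK, hKf⟩ := exists_norm_apply_le_toLp_two_laplacian (E := EuclideanSpace ℝ ι)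
    (V := ℂ) (by rwa [finrank_euclideanSpace])
  refine ⟨K, hK, fun f x ↦ ?_⟩
  calc |f x| = ‖complexifyEuclidean f ((EuclideanSpace.equiv ι ℝ).symm x)‖ :=
        (Complex.norm_real _).symm
    _ ≤ K * (‖(complexifyEuclidean f).toLp 2 volume‖ +
        ‖(Δ (complexifyEuclidean f)).toLp 2 volume‖) := hKf _ _
    _ ≤ _ := by
      rw [laplacian_complexifyEuclidean, ← toLpCLM_apply (𝕜 := ℝ) (f := ∑ i, _), map_sum]
      grw [norm_sum_le]
      simp only [toLpCLM_apply, norm_toLp_complexifyEuclidean, le_refl]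

end Pi

section Commutator

lemma iteratedLineDerivOp_comp_lineDerivOp {V A ι : Type*} [LineDeriv V A A] (e : ι → V) {n : ℕ}
    (u : Fin n → ι) (i : ι) (f : A) :
    ∂^{e ∘ u} (∂_{e i} f) = ∂^{e ∘ (Fin.snoc u i : Fin (n + 1) → ι)} f := by
  rw [LineDeriv.iteratedLineDerivOp_succ_right, Fin.comp_snoc, Fin.init_snoc, Fin.snoc_last]

variable {D E F G : Type*} [NormedAddCommGroup D] [NormedSpace ℝ D] [NormedAddCommGroup E]
  [NormedSpace ℝ E] [NormedAddCommGroup F] [NormedSpace ℝ F] [NormedAddCommGroup G]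
  [NormedSpace ℝ G] (B : E →L[ℝ] F →L[ℝ] G)

lemma lineDerivOp_pairing (v : D) (f : 𝓢(D, E)) (g : 𝓢(D, F)) :
    ∂_{v} (pairing B f g) = pairing B (∂_{v} f) g + pairing B f (∂_{v} g) := by
  ext x
  have h := congr($((B.hasFDerivAt_of_bilinear (f.hasFDerivAt x) (g.hasFDerivAt x)).fderiv) v)
  rw [lineDerivOp_apply_eq_fderiv, add_comm]
  exact h

/-- The symmetric commutator `[∂^m, f, g] = ∂^m (f g) - (∂^m f) g - f ∂^m g`, for the product of
vector-valued functions given by a bilinear map `B`. -/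
noncomputable def symmCommutator {n : ℕ} (m : Fin n → D) (f : 𝓢(D, E)) (g : 𝓢(D, F)) : 𝓢(D, G) :=
  ∂^{m} (pairing B f g) - pairing B (∂^{m} f) g - pairing B f (∂^{m} g)

lemma symmCommutator_fin_one (m : Fin 1 → D) (f : 𝓢(D, E)) (g : 𝓢(D, F)) :
    symmCommutator B m f g = 0 := by
  simp only [symmCommutator, LineDeriv.iteratedLineDerivOp_one, lineDerivOp_pairing]
  abel

lemma symmCommutator_succ {n : ℕ} (m : Fin (n + 1) → D) (f : 𝓢(D, E)) (g : 𝓢(D, F)) :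
    symmCommutator B m f g =
      symmCommutator B (Fin.init m) (∂_{m (Fin.last n)} f) g +
      symmCommutator B (Fin.init m) f (∂_{m (Fin.last n)} g) +
      (pairing B (∂_{m (Fin.last n)} f) (∂^{Fin.init m} g) +
        pairing B (∂^{Fin.init m} f) (∂_{m (Fin.last n)} g)) := by
  simp only [symmCommutator, LineDeriv.iteratedLineDerivOp_succ_right, lineDerivOp_pairing,
    LineDeriv.iteratedLineDerivOp_add]
  abel

lemma seminorm_symmCommutator_le {ι : Type*} (e : ι → D) (N : Seminorm ℝ 𝓢(D, G)) {b : ℝ} {n : ℕ}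
    (w : Fin (n + 1) → ι) (f : 𝓢(D, E)) (g : 𝓢(D, F))
    (hb : ∀ j l, j + l + 1 = n → ∀ (u : Fin (j + 1) → ι) (v : Fin (l + 1) → ι),
      N (pairing B (∂^{e ∘ u} f) (∂^{e ∘ v} g)) ≤ b) :
    N (symmCommutator B (e ∘ w) f g) ≤ (2 ^ (n + 1) - 2) * b := by
  induction n generalizing f g with
  | zero => simp [symmCommutator_fin_one]
  | succ n ih =>
    set i := w (Fin.last (n + 1))
    have hf := ih (Fin.init w) (∂_{e i} f) g fun j l hjl u v ↦ by
      rw [iteratedLineDerivOp_comp_lineDerivOp]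
      exact hb (j + 1) l (by lia) _ v
    have hg := ih (Fin.init w) f (∂_{e i} g) fun j l hjl u v ↦ by
      rw [iteratedLineDerivOp_comp_lineDerivOp]
      exact hb j (l + 1) (by lia) u _
    have hfg := hb 0 n (by lia) (fun _ ↦ i) (Fin.init w)
    have hgf := hb n 0 (by lia) (Fin.init w) (fun _ ↦ i)
    rw [LineDeriv.iteratedLineDerivOp_one] at hfg hgf
    calc N (symmCommutator B (e ∘ w) f g)
        ≤ N (symmCommutator B (e ∘ Fin.init w) (∂_{e i} f) g) +
          N (symmCommutator B (e ∘ Fin.init w) f (∂_{e i} g)) +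
          (N (pairing B (∂_{e i} f) (∂^{e ∘ Fin.init w} g)) +
            N (pairing B (∂^{e ∘ Fin.init w} f) (∂_{e i} g))) := by
          rw [symmCommutator_succ]
          exact (map_add_le_add N _ _).trans
            (add_le_add (map_add_le_add N _ _) (map_add_le_add N _ _))
      _ ≤ (2 ^ (n + 1) - 2) * b + (2 ^ (n + 1) - 2) * b + (b + b) := by
          gcongr <;> assumption
      _ = (2 ^ (n + 1 + 1) - 2) * b := by ring

lemma norm_toLp_pairing_le_of_norm_le_left [MeasurableSpace D] [BorelSpace D]
    [SecondCountableTopology D] {μ : Measure D} [μ.HasTemperateGrowth] (p : ENNReal)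
    {f : 𝓢(D, E)} {c : ℝ} (hf : ∀ x, ‖f x‖ ≤ c) (g : 𝓢(D, F)) :
    ‖(pairing B f g).toLp p μ‖ ≤ ‖B‖ * c * ‖g.toLp p μ‖ := by
  have hc : 0 ≤ c := (norm_nonneg _).trans (hf 0)
  have hle := eLpNorm_le_mul_eLpNorm_of_ae_le_mul (f := pairing B f g) (g := g) (c := ‖B‖ * c)
    (μ := μ) (.of_forall fun x ↦ by
      grw [pairing_apply_apply, B.le_opNorm₂, hf]) p
  rw [norm_toLp, norm_toLp, ← ENNReal.toReal_ofReal (by positivity : 0 ≤ ‖B‖ * c),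
    ← ENNReal.toReal_mul]
  exact ENNReal.toReal_mono
    (ENNReal.mul_ne_top ENNReal.ofReal_ne_top (g.memLp p μ).eLpNorm_ne_top) hle

lemma norm_toLp_pairing_le_of_norm_le_right [MeasurableSpace D] [BorelSpace D]
    [SecondCountableTopology D] {μ : Measure D} [μ.HasTemperateGrowth] (p : ENNReal)
    (f : 𝓢(D, E)) {g : 𝓢(D, F)} {c : ℝ} (hg : ∀ x, ‖g x‖ ≤ c) :
    ‖(pairing B f g).toLp p μ‖ ≤ ‖B‖ * c * ‖f.toLp p μ‖ := by
  have hflip : pairing B f g = pairing B.flip g f := by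
    ext x
    rfl
  rw [hflip, ← B.opNorm_flip]
  exact norm_toLp_pairing_le_of_norm_le_left B.flip p hg f

end Commutator

section MultiIndex

lemma exists_iterate_lineDerivOp_eq {V A ι : Type*} [LineDeriv V A A] (e : ι → V) (i : ι) (n : ℕ)
    {k : ℕ} (w : Fin k → ι) :
    ∃ w' : Fin (k + n) → ι, ∀ f : A, (∂_{e i})^[n] (∂^{e ∘ w} f) = ∂^{e ∘ w'} f := by
  induction n with
  | zero => exact ⟨w, fun f ↦ rfl⟩
  | succ n ih =>
    obtain ⟨w', hw'⟩ := ih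
    refine ⟨Fin.cons i w', fun f ↦ ?_⟩
    rw [Function.iterate_succ_apply', hw', LineDeriv.iteratedLineDerivOp_succ_left]
    rfl

lemma pd3_coe (i : Fin 3) (f : 𝓢(Fin 3 → ℝ, ℝ)) :
    pd3 i f = ⇑(∂_{basisVec i} f : 𝓢(Fin 3 → ℝ, ℝ)) := by
  ext x
  exact (lineDerivOp_apply_eq_fderiv ..).symm

lemma iterate_pd3_coe (i : Fin 3) (n : ℕ) (f : 𝓢(Fin 3 → ℝ, ℝ)) :
    (pd3 i)^[n] f = ⇑((∂_{basisVec i})^[n] f) :=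
  (Function.Semiconj.iterate_right (fun f ↦ (pd3_coe i f).symm) n f).symm

lemma exists_mderiv_coe_eq (α : Fin 3 → ℕ) {k : ℕ} (hα : α 0 + α 1 + α 2 = k) :
    ∃ w : Fin k → Fin 3, ∀ f : 𝓢(Fin 3 → ℝ, ℝ), mderiv α f = ⇑(∂^{basisVec ∘ w} f) := by
  obtain rfl : k = 0 + α 2 + α 1 + α 0 := by lia
  obtain ⟨w₂, hw₂⟩ := exists_iterate_lineDerivOp_eq (A := 𝓢(Fin 3 → ℝ, ℝ)) (basisVec (ι := Fin 3))
    2 (α 2) ![]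
  obtain ⟨w₁, hw₁⟩ := exists_iterate_lineDerivOp_eq (A := 𝓢(Fin 3 → ℝ, ℝ)) (basisVec (ι := Fin 3))
    1 (α 1) w₂
  obtain ⟨w₀, hw₀⟩ := exists_iterate_lineDerivOp_eq (A := 𝓢(Fin 3 → ℝ, ℝ)) (basisVec (ι := Fin 3))
    0 (α 0) w₁
  refine ⟨w₀, fun f ↦ ?_⟩
  simp only [mderiv, iterate_pd3_coe]
  rw [← hw₀, ← hw₁, ← hw₂, LineDeriv.iteratedLineDerivOp_fin_zero]

end MultiIndex

section Norms

section TotalDerivative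

variable {E F : Type*} [NormedAddCommGroup E] [NormedSpace ℝ E] [NormedAddCommGroup F]
  [NormedSpace ℝ F] [MeasurableSpace E] [BorelSpace E] [SecondCountableTopology E]
  {μ : Measure E} [μ.HasTemperateGrowth]

lemma memLp_two_iteratedFDeriv (f : 𝓢(E, F)) (n : ℕ) : MemLp (iteratedFDeriv ℝ n f) 2 μ := by
  have hcont : Continuous (iteratedFDeriv ℝ n f) :=
    (f.smooth ⊤).continuous_iteratedFDeriv (mod_cast le_top)
  have hnorm : Integrable (fun x ↦ ‖iteratedFDeriv ℝ n f x‖) μ := by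
    simpa using f.integrable_pow_mul_iteratedFDeriv μ 0 n
  rw [memLp_two_iff_integrable_sq_norm hcont.aestronglyMeasurable]
  simp only [pow_two]
  refine hnorm.bdd_mul (c := SchwartzMap.seminorm ℝ 0 n f) hcont.norm.aestronglyMeasurable
    (.of_forall fun x ↦ ?_)
  rw [norm_norm]
  exact norm_iteratedFDeriv_le_seminorm ℝ f n x

lemma norm_toLp_iteratedLineDerivOp_le {n : ℕ} {m : Fin n → E} (hm : ∀ i, ‖m i‖ ≤ 1)
    (f : 𝓢(E, F)) :
    ‖(∂^{m} f).toLp 2 μ‖ ≤ (eLpNorm (fun x ↦ ‖iteratedFDeriv ℝ n f x‖) 2 μ).toReal := by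
  rw [norm_toLp]
  refine ENNReal.toReal_mono (memLp_two_iteratedFDeriv f n).norm.eLpNorm_ne_top
    (eLpNorm_mono fun x ↦ ?_)
  rw [iteratedLineDerivOp_eq_iteratedFDeriv, norm_norm]
  refine ((iteratedFDeriv ℝ n f x).le_opNorm m).trans (mul_le_of_le_one_right (norm_nonneg _) ?_)
  exact Finset.prod_le_one (fun i _ ↦ norm_nonneg _) fun i _ ↦ hm i

end TotalDerivative

lemma Hnorm_nonneg (N : ℕ) (f : (Fin 3 → ℝ) → ℝ) : 0 ≤ Hnorm N f :=
  Finset.sum_nonneg fun _ _ ↦ ENNReal.toReal_nonneg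

lemma gradHnorm_nonneg (N : ℕ) (f : (Fin 3 → ℝ) → ℝ) : 0 ≤ gradHnorm N f :=
  Finset.sum_nonneg fun _ _ ↦ Hnorm_nonneg N _

lemma norm_toLp_iteratedLineDerivOp_le_Hnorm {n N : ℕ} (hn : n ≤ N) {m : Fin n → Fin 3 → ℝ}
    (hm : ∀ i, ‖m i‖ ≤ 1) (f : 𝓢(Fin 3 → ℝ, ℝ)) : ‖(∂^{m} f).toLp 2‖ ≤ Hnorm N f :=
  (norm_toLp_iteratedLineDerivOp_le hm f).trans <|
    Finset.single_le_sum
      (f := fun j ↦ (eLpNorm (fun x ↦ ‖iteratedFDeriv ℝ j f x‖) 2 volume).toReal)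
      (fun _ _ ↦ ENNReal.toReal_nonneg) (Finset.mem_range_succ_iff.mpr hn)

lemma norm_toLp_iteratedLineDerivOp_le_gradHnorm {n N : ℕ} (hn : n ≤ N)
    (u : Fin (n + 1) → Fin 3) (f : 𝓢(Fin 3 → ℝ, ℝ)) :
    ‖(∂^{basisVec ∘ u} f).toLp 2‖ ≤ gradHnorm N f := by
  have hunit : ∀ i, ‖Fin.init (basisVec ∘ u) i‖ ≤ 1 := fun i ↦ by
    simp [Fin.init, Pi.norm_single]
  rw [LineDeriv.iteratedLineDerivOp_succ_right]
  refine (norm_toLp_iteratedLineDerivOp_le_Hnorm hn hunit _).trans ?_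
  rw [Function.comp_apply, ← pd3_coe]
  exact Finset.single_le_sum (f := fun i ↦ Hnorm N (pd3 i f)) (fun _ _ ↦ Hnorm_nonneg N _)
    (Finset.mem_univ _)

lemma exists_norm_iteratedLineDerivOp_apply_le_gradHnorm :
    ∃ K : ℝ, 0 < K ∧ ∀ {n N : ℕ}, n + 2 ≤ N → ∀ (u : Fin (n + 1) → Fin 3)
      (f : 𝓢(Fin 3 → ℝ, ℝ)) (x : Fin 3 → ℝ), ‖(∂^{basisVec ∘ u} f) x‖ ≤ K * gradHnorm N f := by
  obtain ⟨K, hK, hKf⟩ := exists_abs_apply_le_toLp_two_lineDerivOp (Fin 3) (by simp)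
  refine ⟨K * (1 + 3), by positivity, fun {n N} hn u f x ↦ ?_⟩
  have hu : ‖(∂^{basisVec ∘ u} f).toLp 2‖ ≤ gradHnorm N f :=
    norm_toLp_iteratedLineDerivOp_le_gradHnorm (by lia) u f
  have hΔ (i : Fin 3) :
      ‖(∂_{basisVec i} (∂_{basisVec i} (∂^{basisVec ∘ u} f))).toLp 2‖ ≤ gradHnorm N f :=
    norm_toLp_iteratedLineDerivOp_le_gradHnorm hn (Fin.cons i (Fin.cons i u)) f
  calc ‖(∂^{basisVec ∘ u} f) x‖
      ≤ K * (‖(∂^{basisVec ∘ u} f).toLp 2 volume‖ + ∑ i : Fin 3,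
        ‖(∂_{basisVec i} (∂_{basisVec i} (∂^{basisVec ∘ u} f))).toLp 2 volume‖) := hKf _ x
    _ ≤ K * (gradHnorm N f + ∑ _i : Fin 3, gradHnorm N f) := by gcongr with i; exact hΔ i
    _ = K * (1 + 3) * gradHnorm N f := by
      rw [Fin.sum_const, nsmul_eq_mul]
      push_cast
      ring

end Norms

section Estimate

lemma exists_norm_toLp_pairing_mul_le :
    ∃ K : ℝ, 0 < K ∧ ∀ {j l : ℕ} (u : Fin (j + 1) → Fin 3) (v : Fin (l + 1) → Fin 3)
      (g h : 𝓢(Fin 3 → ℝ, ℝ)),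
      ‖(pairing (.mul ℝ ℝ) (∂^{basisVec ∘ u} g) (∂^{basisVec ∘ v} h)).toLp 2‖ ≤
        K * (gradHnorm (j + l) g * gradHnorm ((j + l) / 2 + 2) h +
          gradHnorm ((j + l) / 2 + 2) g * gradHnorm (j + l) h) := by
  obtain ⟨K, hK, hsup⟩ := exists_norm_iteratedLineDerivOp_apply_le_gradHnorm
  refine ⟨K, hK, fun {j l} u v g h ↦ ?_⟩
  have hg : ‖(∂^{basisVec ∘ u} g).toLp 2‖ ≤ gradHnorm (j + l) g :=
    norm_toLp_iteratedLineDerivOp_le_gradHnorm (by lia) u g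
  have hh : ‖(∂^{basisVec ∘ v} h).toLp 2‖ ≤ gradHnorm (j + l) h :=
    norm_toLp_iteratedLineDerivOp_le_gradHnorm (by lia) v h
  have hnonneg (N : ℕ) (f : (Fin 3 → ℝ) → ℝ) : 0 ≤ K * gradHnorm N f :=
    mul_nonneg hK.le (gradHnorm_nonneg N f)
  set M := (j + l) / 2 + 2
  rcases le_total j l with hjl | hlj
  · have hsup_g (x) : ‖(∂^{basisVec ∘ u} g) x‖ ≤ K * gradHnorm M g := hsup (by lia) u g x
    grw [norm_toLp_pairing_le_of_norm_le_left _ 2 hsup_g, ContinuousLinearMap.opNorm_mul, one_mul,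
      hh]
    · linarith [mul_nonneg (hnonneg (j + l) g) (gradHnorm_nonneg M h)]
    · exact hnonneg M g
  · have hsup_h (x) : ‖(∂^{basisVec ∘ v} h) x‖ ≤ K * gradHnorm M h := hsup (by lia) v h x
    grw [norm_toLp_pairing_le_of_norm_le_right _ 2 _ hsup_h, ContinuousLinearMap.opNorm_mul,
      one_mul, hg]
    · linarith [mul_nonneg (hnonneg M g) (gradHnorm_nonneg (j + l) h)]
    · exact hnonneg M h

lemma toReal_eLpNorm_mderiv_commutator_eq {α : Fin 3 → ℕ} {k : ℕ} {w : Fin k → Fin 3}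
    (hw : ∀ f : 𝓢(Fin 3 → ℝ, ℝ), mderiv α f = ⇑(∂^{basisVec ∘ w} f)) (g h : 𝓢(Fin 3 → ℝ, ℝ)) :
    (eLpNorm (fun x ↦ mderiv α (fun y ↦ g y * h y) x - mderiv α g x * h x - g x * mderiv α h x)
      2 volume).toReal = ‖(symmCommutator (.mul ℝ ℝ) (basisVec ∘ w) g h).toLp 2‖ := by
  have hgh : (fun y ↦ g y * h y) = ⇑(pairing (.mul ℝ ℝ) g h) := rfl
  rw [norm_toLp, hgh, hw, hw, hw]
  rfl

theorem moser_symmetric_commutator_general (k : ℕ) (hk : 2 ≤ k) :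
    ∃ C > 0, ∀ g h : 𝓢(Fin 3 → ℝ, ℝ), ∀ α : Fin 3 → ℕ, α 0 + α 1 + α 2 = k →
      (eLpNorm (fun x ↦ mderiv α (fun y ↦ g y * h y) x - mderiv α g x * h x - g x * mderiv α h x)
          2 volume).toReal
        ≤ C * (gradHnorm (k - 2) g * gradHnorm ((k - 2) / 2 + 2) h
            + gradHnorm ((k - 2) / 2 + 2) g * gradHnorm (k - 2) h) := by
  obtain ⟨K, hK, hprod⟩ := exists_norm_toLp_pairing_mul_le
  obtain ⟨n, rfl⟩ : ∃ n, k = n + 1 := ⟨k - 1, by lia⟩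
  have hpow : (2 : ℝ) ^ 1 < 2 ^ (n + 1) := pow_lt_pow_right₀ one_lt_two (by lia)
  refine ⟨(2 ^ (n + 1) - 2) * K, mul_pos (by linarith) hK, fun g h α hα ↦ ?_⟩
  obtain ⟨w, hw⟩ := exists_mderiv_coe_eq α hα
  let L2norm : Seminorm ℝ 𝓢(Fin 3 → ℝ, ℝ) :=
    (normSeminorm ℝ (Lp ℝ 2 volume)).comp (toLpCLM ℝ ℝ 2 volume).toLinearMap
  rw [toReal_eLpNorm_mderiv_commutator_eq hw, mul_assoc]
  refine seminorm_symmCommutator_le _ basisVec L2norm w g h fun j l hjl u v ↦ ?_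
  rw [show n + 1 - 2 = j + l by lia]
  exact hprod u v g h

end Estimate

/-- **Moser-type symmetric commutator estimate.** For every `k ≥ 2` there is a constant
`C > 0` such that for all smooth compactly supported `g h : ℝ³ → ℝ` and every multi-index `α`
with `|α| = k`, the symmetric commutator `[∂^α, g, h] = ∂^α (g h) − (∂^α g) h − g ∂^α h`
satisfies
`‖[∂^α, g, h]‖_{L²} ≤ C (‖∇g‖_{H^{k−2}} ‖∇h‖_{H^{⌊(k−2)/2⌋+2}} + ‖∇g‖_{H^{⌊(k−2)/2⌋+2}} ‖∇h‖_{H^{k−2}})`. -/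
theorem moser_symmetric_commutator (k : ℕ) (hk : 2 ≤ k) :
    ∃ C > 0, ∀ g h : (Fin 3 → ℝ) → ℝ,
      ContDiff ℝ (⊤ : ℕ∞) g → HasCompactSupport g → ContDiff ℝ (⊤ : ℕ∞) h → HasCompactSupport h →
      ∀ α : Fin 3 → ℕ, α 0 + α 1 + α 2 = k →
        (eLpNorm (fun x => mderiv α (fun y => g y * h y) x
              - mderiv α g x * h x - g x * mderiv α h x) 2 volume).toReal
          ≤ C * (gradHnorm (k - 2) g * gradHnorm ((k - 2) / 2 + 2) h
              + gradHnorm ((k - 2) / 2 + 2) g * gradHnorm (k - 2) h) := by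
  obtain ⟨C, hC, hmoser⟩ := moser_symmetric_commutator_general k hk
  exact ⟨C, hC, fun g h hg hgc hh hhc ↦ hmoser (hgc.toSchwartzMap hg) (hhc.toSchwartzMap hh)⟩
end
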